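/- Let c₁, c₂ ∈ ℝ and W(x) = c₁ tanh(x) + c₂. Suppose u : ℝ × ℝ → ℝ is smooth, satisfies the KdV equation ∂_t u = −∂ₓ³u + 6 u ∂ₓu everywhere, and for every pair of nonnegative integers (j,k) and every n ∈ ℕ the quantity sup_{x∈ℝ} (1+|x|)ⁿ |∂_tʲ∂ₓᵏ(u(t,x) − W(x))| is finite and locally bounded in t (i.e., u(t,·) − W is Schwartz in x, locally uniformly in t together with all derivatives). Then for every t the function x ↦ u(t,x)² − u(0,x)² is integrable, the map t ↦ ∫_ℝ ½(u(t,x)² − u(0,x)²) dx is differentiable, and its derivative equals the constant 2[(c₁+c₂)³ − (c₂−c₁)³] = 4c₁³ + 12c₁c₂². -/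

import Mathlib

open MeasureTheory

/-!
The momentum density `½u²` of a KdV solution obeys the local conservation law
`∂ₜ(½u²) = ∂ₓ(2u³ - u uₓₓ + ½uₓ²)`. Since `u uₜ` is dominated by an integrable function of `x`
locally uniformly in `t`, one may differentiate `∫ (½u(t)² - ½u(0)²)` under the integral sign, and
the derivative is the difference of the limits of the flux at `±∞`. There `uₓ` and `uₓₓ` vanish,
so only the cubic term `2u³` contributes.
-/

open Filter Topology

section Domination

variable {α E : Type*} [MeasurableSpace α] {μ : Measure α} [NormedAddCommGroup E]

/-- The family `f t` is dominated by integrable functions, locally uniformly in the time `t`: this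
is the hypothesis under which `t`-derivatives may be taken under the integral sign. -/
def LocallyDominated (f : ℝ → α → E) (μ : Measure α) : Prop :=
  ∀ T > 0, ∃ g : α → ℝ, Integrable g μ ∧ ∀ t, |t| ≤ T → ∀ x, ‖f t x‖ ≤ g x

namespace LocallyDominated

lemma integrable {f : ℝ → α → E} (hf : LocallyDominated f μ) {t : ℝ}
    (hmeas : AEStronglyMeasurable (f t) μ) : Integrable (f t) μ := by
  obtain ⟨g, hg, hfg⟩ := hf (|t| + 1) (by positivity)
  exact hg.mono' hmeas (.of_forall (hfg t (by linarith)))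

lemma bdd_mul {R : Type*} [NormedRing R] {f g : ℝ → α → R} (hg : LocallyDominated g μ)
    (hf : ∀ T > 0, ∃ M, ∀ t, |t| ≤ T → ∀ x, ‖f t x‖ ≤ M) :
    LocallyDominated (fun t x => f t x * g t x) μ := by
  intro T hT
  obtain ⟨M, hM⟩ := hf T hT
  obtain ⟨G, hG, hgG⟩ := hg T hT
  refine ⟨fun x => M * G x, hG.const_mul M, fun t ht x => ?_⟩
  calc ‖f t x * g t x‖ ≤ ‖f t x‖ * ‖g t x‖ := norm_mul_le _ _
    _ ≤ M * G x :=
      mul_le_mul (hM t ht x) (hgG t ht x) (norm_nonneg _) ((norm_nonneg _).trans (hM t ht x))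

variable [NormedSpace ℝ E] {ρ ρ' : ℝ → α → E}

lemma integrable_sub (hdom : LocallyDominated ρ' μ)
    (hmeas : ∀ t, AEStronglyMeasurable (ρ t) μ)
    (hderiv : ∀ t x, HasDerivAt (fun s => ρ s x) (ρ' t x) t) (s t : ℝ) :
    Integrable (fun x => ρ t x - ρ s x) μ := by
  obtain ⟨g, hg, hle⟩ := hdom (max |s| |t| + 1) (by positivity)
  have hs := abs_le.1 ((le_max_left |s| |t|).trans (lt_add_one _).le)
  have ht := abs_le.1 ((le_max_right |s| |t|).trans (lt_add_one _).le)
  refine (hg.mul_const ‖t - s‖).mono' ((hmeas t).sub (hmeas s)) (.of_forall fun x => ?_)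
  exact (convex_Icc _ _).norm_image_sub_le_of_norm_hasDerivWithin_le
    (fun r _ => (hderiv r x).hasDerivWithinAt) (fun r hr => hle r (abs_le.2 hr) x) hs ht

lemma hasDerivAt_integral_sub (hdom : LocallyDominated ρ' μ)
    (hmeas : ∀ t, AEStronglyMeasurable (ρ t) μ)
    (hderiv : ∀ t x, HasDerivAt (fun s => ρ s x) (ρ' t x) t) (s : ℝ) {t : ℝ}
    (hmeas' : AEStronglyMeasurable (ρ' t) μ) :
    HasDerivAt (fun r => ∫ x, (ρ r x - ρ s x) ∂μ) (∫ x, ρ' t x ∂μ) t := by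
  obtain ⟨g, hg, hle⟩ := hdom (|t| + 1) (by positivity)
  have abs_le_of_mem_ball {r : ℝ} (hr : r ∈ Metric.ball t 1) : |r| ≤ |t| + 1 := by
    have hdist : |r - t| < 1 := hr
    linarith [abs_sub_abs_le_abs_sub r t]
  exact (hasDerivAt_integral_of_dominated_loc_of_deriv_le (Metric.ball_mem_nhds t one_pos)
    (.of_forall fun r => (hmeas r).sub (hmeas s)) (hdom.integrable_sub hmeas hderiv s t) hmeas'
    (.of_forall fun x r hr => hle r (abs_le_of_mem_ball hr) x) hg
    (.of_forall fun x r _ => (hderiv r x).sub_const (ρ s x))).2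

end LocallyDominated

lemma hasDerivAt_integral_sub_of_conservation_law [NormedSpace ℝ E] [CompleteSpace E]
    {ρ ρ' : ℝ → ℝ → E} {φ : ℝ → E} {a b : E} {t : ℝ}
    (hdom : LocallyDominated ρ' volume) (hmeas : ∀ t, AEStronglyMeasurable (ρ t))
    (hderiv : ∀ t x, HasDerivAt (fun s => ρ s x) (ρ' t x) t)
    (hφ : ∀ x, HasDerivAt φ (ρ' t x) x)
    (hbot : Tendsto φ atBot (𝓝 a)) (htop : Tendsto φ atTop (𝓝 b)) (s : ℝ) :
    HasDerivAt (fun r => ∫ x, (ρ r x - ρ s x)) (b - a) t := by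
  have hmeas' : AEStronglyMeasurable (ρ' t) := by
    rw [← funext fun x => (hφ x).deriv]
    exact aestronglyMeasurable_deriv φ volume
  rw [← integral_of_hasDerivAt_of_tendsto hφ (hdom.integrable hmeas') hbot htop]
  exact hdom.hasDerivAt_integral_sub hmeas hderiv s hmeas'

end Domination

section Decay

/-- The family `f t` is `O((1 + |x|)⁻²)` in space, locally uniformly in the time `t`: the part of
Schwartz decay that makes `f t` bounded, integrable and vanishing at infinity. -/
def HasQuadraticDecay (f : ℝ → ℝ → ℝ) : Prop :=
  ∀ T > 0, ∃ C, ∀ t, |t| ≤ T → ∀ x, (1 + |x|) ^ 2 * |f t x| ≤ C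

namespace HasQuadraticDecay

variable {f : ℝ → ℝ → ℝ}

lemma exists_abs_le_mul_inv (hf : HasQuadraticDecay f) {T : ℝ} (hT : 0 < T) :
    ∃ C, ∀ t, |t| ≤ T → ∀ x, |f t x| ≤ C * (1 + x ^ 2)⁻¹ := by
  obtain ⟨C, hC⟩ := hf T hT
  refine ⟨C, fun t ht x => ?_⟩
  rw [← div_eq_mul_inv, le_div_iff₀' (by positivity)]
  have hweight : 1 + x ^ 2 ≤ (1 + |x|) ^ 2 := by nlinarith [abs_nonneg x, sq_abs x]
  exact (mul_le_mul_of_nonneg_right hweight (abs_nonneg _)).trans (hC t ht x)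

lemma locallyDominated (hf : HasQuadraticDecay f) : LocallyDominated f volume := by
  intro T hT
  obtain ⟨C, hC⟩ := hf.exists_abs_le_mul_inv hT
  exact ⟨_, integrable_inv_one_add_sq.const_mul C, hC⟩

lemma exists_abs_le (hf : HasQuadraticDecay f) {T : ℝ} (hT : 0 < T) :
    ∃ C, ∀ t, |t| ≤ T → ∀ x, |f t x| ≤ C := by
  obtain ⟨C, hC⟩ := hf T hT
  refine ⟨C, fun t ht x => (le_mul_of_one_le_left (abs_nonneg _) ?_).trans (hC t ht x)⟩
  exact one_le_pow₀ (by linarith [abs_nonneg x])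

lemma tendsto_cocompact (hf : HasQuadraticDecay f) (t : ℝ) :
    Tendsto (f t) (cocompact ℝ) (𝓝 0) := by
  obtain ⟨C, hC⟩ := hf.exists_abs_le_mul_inv (T := |t| + 1) (by positivity)
  have hsq : Tendsto (fun x : ℝ => 1 + x ^ 2) (cocompact ℝ) atTop := by
    refine tendsto_atTop_add_const_left _ 1 ?_
    simpa only [Function.comp_def, Real.norm_eq_abs, sq_abs] using
      (tendsto_pow_atTop two_ne_zero).comp (tendsto_norm_cocompact_atTop (E := ℝ))
  refine squeeze_zero_norm (hC t (by linarith)) ?_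
  simpa only [mul_zero, Function.comp_def] using (tendsto_inv_atTop_zero.comp hsq).const_mul C

end HasQuadraticDecay

lemma locallyDominated_mul_of_hasQuadraticDecay_sub {f g : ℝ → ℝ → ℝ} {W : ℝ → ℝ} {M : ℝ}
    (hW : ∀ x, |W x| ≤ M) (hf : HasQuadraticDecay fun t x => f t x - W x)
    (hg : HasQuadraticDecay g) : LocallyDominated (fun t x => f t x * g t x) volume := by
  refine hg.locallyDominated.bdd_mul fun T hT => ?_
  obtain ⟨C, hC⟩ := hf.exists_abs_le hT
  refine ⟨C + M, fun t ht x => ?_⟩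
  calc |f t x| = |(f t x - W x) + W x| := by rw [sub_add_cancel]
    _ ≤ |f t x - W x| + |W x| := abs_add_le _ _
    _ ≤ C + M := add_le_add (hC t ht x) (hW x)

end Decay

section StepLike

/-- A `C²` function with limits `a` at `-∞` and `b` at `+∞` whose first two derivatives vanish at
infinity: the boundary behaviour that determines the momentum flux of KdV. -/
structure IsStepLike (f : ℝ → ℝ) (a b : ℝ) : Prop where
  contDiff : ContDiff ℝ 2 f
  tendsto_atBot : Tendsto f atBot (𝓝 a)
  tendsto_atTop : Tendsto f atTop (𝓝 b)
  tendsto_deriv : Tendsto (deriv f) (cocompact ℝ) (𝓝 0)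
  tendsto_iteratedDeriv_two : Tendsto (iteratedDeriv 2 f) (cocompact ℝ) (𝓝 0)

namespace IsStepLike

variable {f g : ℝ → ℝ} {a b : ℝ}

lemma exists_abs_le (hf : IsStepLike f a b) : ∃ M, ∀ x, |f x| ≤ M := by
  have hbounded : Bornology.IsBounded (Set.range f) :=
    hf.contDiff.continuous.isBounded_range_iff_isBigO_atTop_atBot.2
      ⟨hf.tendsto_atTop.isBigO_one ℝ, hf.tendsto_atBot.isBigO_one ℝ⟩
  simpa only [Set.forall_mem_range, Real.norm_eq_abs] using hbounded.exists_norm_le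

lemma const_mul_add_const (hf : IsStepLike f a b) (c d : ℝ) :
    IsStepLike (fun x => c * f x + d) (c * a + d) (c * b + d) where
  contDiff := (contDiff_const.mul hf.contDiff).add contDiff_const
  tendsto_atBot := (hf.tendsto_atBot.const_mul c).add_const d
  tendsto_atTop := (hf.tendsto_atTop.const_mul c).add_const d
  tendsto_deriv := by
    simpa using hf.tendsto_deriv.const_mul c
  tendsto_iteratedDeriv_two := by
    simpa [iteratedDeriv_succ] using hf.tendsto_iteratedDeriv_two.const_mul c

lemma of_tendsto_sub (hg : IsStepLike g a b) (hf : ContDiff ℝ 2 f)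
    (hsub : ∀ k ≤ 2, Tendsto (iteratedDeriv k fun x => f x - g x) (cocompact ℝ) (𝓝 0)) :
    IsStepLike f a b := by
  have hderiv : ∀ k ≤ 2, (iteratedDeriv k fun x => f x - g x) + iteratedDeriv k g =
      iteratedDeriv k f := by
    intro k hk
    have hk' : (k : WithTop ℕ∞) ≤ 2 := mod_cast hk
    ext x
    rw [Pi.add_apply, iteratedDeriv_fun_sub (hf.of_le hk').contDiffAt
      (hg.contDiff.of_le hk').contDiffAt, sub_add_cancel]
  have tendsto_iteratedDeriv {k : ℕ} (hk : k ≤ 2) {l : Filter ℝ} (hl : l ≤ cocompact ℝ) {c : ℝ}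
      (hgk : Tendsto (iteratedDeriv k g) l (𝓝 c)) : Tendsto (iteratedDeriv k f) l (𝓝 c) := by
    rw [← hderiv k hk, ← zero_add c]
    exact ((hsub k hk).mono_left hl).add hgk
  refine ⟨hf, ?_, ?_, ?_, tendsto_iteratedDeriv le_rfl le_rfl hg.tendsto_iteratedDeriv_two⟩
  · simpa using tendsto_iteratedDeriv zero_le_two atBot_le_cocompact
      (by simpa using hg.tendsto_atBot)
  · simpa using tendsto_iteratedDeriv zero_le_two atTop_le_cocompact
      (by simpa using hg.tendsto_atTop)
  · simpa using tendsto_iteratedDeriv one_le_two le_rfl (by simpa using hg.tendsto_deriv)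

end IsStepLike

lemma tanh_eq_two_mul_sigmoid_sub_one (x : ℝ) : Real.tanh x = 2 * Real.sigmoid (2 * x) - 1 := by
  have hexp : Real.exp (-(2 * x)) = Real.exp (-x) / Real.exp x := by
    rw [← Real.exp_sub]
    ring_nf
  rw [Real.tanh_eq, Real.sigmoid_def, hexp]
  field_simp
  ring

lemma tendsto_tanh_atTop : Tendsto Real.tanh atTop (𝓝 1) := by
  have hlim : Tendsto (fun x => 2 * Real.sigmoid (2 * x) - 1) atTop (𝓝 (2 * 1 - 1)) :=
    ((Real.tendsto_sigmoid_atTop.comp (tendsto_id.const_mul_atTop two_pos)).const_mul 2).sub_const 1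
  rwa [← funext tanh_eq_two_mul_sigmoid_sub_one, two_mul, add_sub_cancel_right] at hlim

lemma tendsto_tanh_atBot : Tendsto Real.tanh atBot (𝓝 (-1)) := by
  refine (tendsto_tanh_atTop.comp tendsto_neg_atBot_atTop).neg.congr fun x => ?_
  simp

lemma hasDerivAt_tanh (x : ℝ) : HasDerivAt Real.tanh (1 - Real.tanh x ^ 2) x := by
  have hcosh := (Real.cosh_pos x).ne'
  rw [funext Real.tanh_eq_sinh_div_cosh]
  refine ((Real.hasDerivAt_sinh x).div (Real.hasDerivAt_cosh x) hcosh).congr_deriv ?_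
  field_simp

lemma isStepLike_tanh : IsStepLike Real.tanh (-1) 1 := by
  have hderiv : deriv Real.tanh = fun x => 1 - Real.tanh x ^ 2 :=
    funext fun x => (hasDerivAt_tanh x).deriv
  have hderiv₂ : iteratedDeriv 2 Real.tanh =
      fun x => -(2 * Real.tanh x * (1 - Real.tanh x ^ 2)) := by
    ext x
    rw [iteratedDeriv_succ, iteratedDeriv_one, hderiv]
    exact (((hasDerivAt_tanh x).pow 2).const_sub 1).deriv.trans (by simp)
  have tendsto_one_sub_sq : Tendsto (fun x => 1 - Real.tanh x ^ 2) (cocompact ℝ) (𝓝 0) := by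
    rw [cocompact_eq_atBot_atTop, tendsto_sup]
    exact ⟨by simpa using (tendsto_tanh_atBot.pow 2).const_sub 1,
      by simpa using (tendsto_tanh_atTop.pow 2).const_sub 1⟩
  refine ⟨?_, tendsto_tanh_atBot, tendsto_tanh_atTop, ?_, ?_⟩
  · rw [funext Real.tanh_eq_sinh_div_cosh]
    exact Real.contDiff_sinh.div Real.contDiff_cosh fun x => (Real.cosh_pos x).ne'
  · rwa [hderiv]
  · rw [hderiv₂]
    obtain ⟨hbot, htop⟩ := tendsto_sup.1 (cocompact_eq_atBot_atTop (α := ℝ) ▸ tendsto_one_sub_sq)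
    rw [cocompact_eq_atBot_atTop, tendsto_sup]
    exact ⟨by simpa using ((tendsto_tanh_atBot.const_mul 2).mul hbot).neg,
      by simpa using ((tendsto_tanh_atTop.const_mul 2).mul htop).neg⟩

end StepLike

section KdV

/-- Classical solutions `u t x` of the Korteweg–de Vries equation `uₜ = -uₓₓₓ + 6 u uₓ`, with just
the regularity the equation needs. -/
structure IsKdVSolution (u : ℝ → ℝ → ℝ) : Prop where
  contDiff_space : ∀ t, ContDiff ℝ 3 (u t)
  differentiable_time : ∀ x, Differentiable ℝ fun t => u t x
  equation : ∀ t x, deriv (fun s => u s x) t =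
    -(iteratedDeriv 3 (u t) x) + 6 * u t x * deriv (u t) x

/-- The flux `2f³ - f f'' + ½f'²` of the momentum density `½u²` under KdV, for a spatial profile
`f = u t`. -/
noncomputable def momentumFlux (f : ℝ → ℝ) (x : ℝ) : ℝ :=
  2 * f x ^ 3 - f x * iteratedDeriv 2 f x + (1 / 2) * deriv f x ^ 2

lemma hasDerivAt_momentumFlux {f : ℝ → ℝ} (hf : ContDiff ℝ 3 f) (x : ℝ) :
    HasDerivAt (momentumFlux f)
      (f x * (-(iteratedDeriv 3 f x) + 6 * f x * deriv f x)) x := by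
  have h₀ : HasDerivAt f (deriv f x) x := (hf.differentiable (by simp) x).hasDerivAt
  have h₁ : HasDerivAt (deriv f) (iteratedDeriv 2 f x) x := by
    simpa only [iteratedDeriv_succ, iteratedDeriv_zero] using
      (hf.differentiable_iteratedDeriv 1 (by norm_num) x).hasDerivAt
  have h₂ : HasDerivAt (iteratedDeriv 2 f) (iteratedDeriv 3 f x) x := by
    rw [iteratedDeriv_succ (n := 2)]
    exact (hf.differentiable_iteratedDeriv 2 (by norm_num) x).hasDerivAt
  refine ((((h₀.pow 3).const_mul 2).sub (h₀.mul h₂)).add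
    ((h₁.pow 2).const_mul (1 / 2))).congr_deriv ?_
  push_cast
  ring

lemma tendsto_momentumFlux {f : ℝ → ℝ} {c : ℝ} {l : Filter ℝ} (h₀ : Tendsto f l (𝓝 c))
    (h₁ : Tendsto (deriv f) l (𝓝 0)) (h₂ : Tendsto (iteratedDeriv 2 f) l (𝓝 0)) :
    Tendsto (momentumFlux f) l (𝓝 (2 * c ^ 3)) := by
  have hlim := (((h₀.pow 3).const_mul 2).sub (h₀.mul h₂)).add ((h₁.pow 2).const_mul (1 / 2))
  rwa [mul_zero, sub_zero, zero_pow two_ne_zero, mul_zero, add_zero] at hlim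

namespace IsKdVSolution

variable {u : ℝ → ℝ → ℝ}

lemma of_contDiff (hsmooth : ContDiff ℝ 3 fun p : ℝ × ℝ => u p.1 p.2)
    (hequation : ∀ t x, deriv (fun s => u s x) t =
      -(iteratedDeriv 3 (u t) x) + 6 * u t x * deriv (u t) x) : IsKdVSolution u where
  contDiff_space _ := hsmooth.comp (contDiff_const.prodMk contDiff_id)
  differentiable_time _ :=
    (hsmooth.comp (contDiff_id.prodMk contDiff_const)).differentiable (by simp)
  equation := hequation

lemma hasDerivAt_momentumDensity (hu : IsKdVSolution u) (t x : ℝ) :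
    HasDerivAt (fun s => (1 / 2) * u s x ^ 2) (u t x * deriv (fun s => u s x) t) t := by
  refine (((hu.differentiable_time x t).hasDerivAt.pow 2).const_mul (1 / 2)).congr_deriv ?_
  push_cast
  ring

lemma aestronglyMeasurable_momentumDensity (hu : IsKdVSolution u) (t : ℝ) :
    AEStronglyMeasurable fun x => (1 / 2) * u t x ^ 2 :=
  (((hu.contDiff_space t).continuous.pow 2).const_mul (1 / 2)).aestronglyMeasurable

lemma integrable_sq_sub_sq (hu : IsKdVSolution u)
    (hdom : LocallyDominated (fun t x => u t x * deriv (fun s => u s x) t) volume) (s t : ℝ) :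
    Integrable fun x => u t x ^ 2 - u s x ^ 2 := by
  refine ((hdom.integrable_sub hu.aestronglyMeasurable_momentumDensity
    hu.hasDerivAt_momentumDensity s t).const_mul 2).congr (.of_forall fun x => ?_)
  ring

lemma hasDerivAt_integral_sq_sub_sq (hu : IsKdVSolution u)
    (hdom : LocallyDominated (fun t x => u t x * deriv (fun s => u s x) t) volume)
    {t a b : ℝ} (hstep : IsStepLike (u t) a b) (s : ℝ) :
    HasDerivAt (fun r => ∫ x, (1 / 2) * (u r x ^ 2 - u s x ^ 2)) (2 * (b ^ 3 - a ^ 3)) t := by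
  have hflux (x : ℝ) :
      HasDerivAt (momentumFlux (u t)) (u t x * deriv (fun s => u s x) t) x := by
    rw [hu.equation]
    exact hasDerivAt_momentumFlux (hu.contDiff_space t) x
  have hbot : Tendsto (momentumFlux (u t)) atBot (𝓝 (2 * a ^ 3)) :=
    tendsto_momentumFlux hstep.tendsto_atBot (hstep.tendsto_deriv.mono_left atBot_le_cocompact)
      (hstep.tendsto_iteratedDeriv_two.mono_left atBot_le_cocompact)
  have htop : Tendsto (momentumFlux (u t)) atTop (𝓝 (2 * b ^ 3)) :=
    tendsto_momentumFlux hstep.tendsto_atTop (hstep.tendsto_deriv.mono_left atTop_le_cocompact)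
      (hstep.tendsto_iteratedDeriv_two.mono_left atTop_le_cocompact)
  simp only [mul_sub]
  exact hasDerivAt_integral_sub_of_conservation_law hdom hu.aestronglyMeasurable_momentumDensity
    hu.hasDerivAt_momentumDensity hflux hbot htop s

end IsKdVSolution

end KdV

-- The pairs with `2 * j + k ≤ 2` pick out `u - W`, its first two `x`-derivatives and `uₜ`.
theorem stmt1_general {W : ℝ → ℝ} {a b : ℝ} (hW : IsStepLike W a b) {u : ℝ → ℝ → ℝ}
    (hu : IsKdVSolution u)
    (hdecay : ∀ j k, 2 * j + k ≤ 2 → HasQuadraticDecay fun t x =>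
      iteratedDeriv j (fun s => iteratedDeriv k (fun y => u s y - W y) x) t) :
    (∀ t, Integrable fun x => u t x ^ 2 - u 0 x ^ 2) ∧
    (∀ t, HasDerivAt (fun s => ∫ x, (1 / 2) * (u s x ^ 2 - u 0 x ^ 2))
      (2 * (b ^ 3 - a ^ 3)) t) := by
  obtain ⟨M, hM⟩ := hW.exists_abs_le
  have hsub : HasQuadraticDecay fun t x => u t x - W x := by
    simpa using hdecay 0 0 (by simp)
  have htime : HasQuadraticDecay fun t x => deriv (fun s => u s x) t := by
    simpa using hdecay 1 0 (by simp)
  have hdom := locallyDominated_mul_of_hasQuadraticDecay_sub hM hsub htime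
  have hstep (t : ℝ) : IsStepLike (u t) a b :=
    hW.of_tendsto_sub ((hu.contDiff_space t).of_le (by norm_num)) fun k hk => by
      simpa using (hdecay 0 k (by simpa using hk)).tendsto_cocompact t
  exact ⟨hu.integrable_sq_sub_sq hdom 0, fun t => hu.hasDerivAt_integral_sq_sub_sq hdom (hstep t) 0⟩

/-- For a smooth solution `u` of KdV which is a Schwartz perturbation
(locally uniformly in time, together with all derivatives) of the step
`W(x) = c₁ tanh x + c₂`, the momentum difference
`t ↦ ∫ ½(u(t,x)² − u(0,x)²) dx` is differentiable with constant derivative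
`2[(c₁+c₂)³ − (c₂−c₁)³] = 4c₁³ + 12c₁c₂²`. -/
theorem stmt1 (c₁ c₂ : ℝ) (u : ℝ → ℝ → ℝ)
    (hsmooth : ContDiff ℝ (⊤ : ℕ∞) (fun p : ℝ × ℝ => u p.1 p.2))
    (hkdv : ∀ t x : ℝ, deriv (fun s => u s x) t =
      -(iteratedDeriv 3 (u t) x) + 6 * u t x * deriv (u t) x)
    (hdecay : ∀ j k n : ℕ, ∀ T > (0 : ℝ), ∃ C : ℝ, ∀ t : ℝ, |t| ≤ T → ∀ x : ℝ,
      (1 + |x|) ^ n *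
        |iteratedDeriv j
          (fun s => iteratedDeriv k (fun y => u s y - (c₁ * Real.tanh y + c₂)) x) t| ≤ C) :
    (∀ t : ℝ, Integrable (fun x => u t x ^ 2 - u 0 x ^ 2)) ∧
    (∀ t : ℝ, HasDerivAt (fun s => ∫ x : ℝ, (1 / 2) * (u s x ^ 2 - u 0 x ^ 2))
      (4 * c₁ ^ 3 + 12 * c₁ * c₂ ^ 2) t) := by
  convert stmt1_general (isStepLike_tanh.const_mul_add_const c₁ c₂)
    (.of_contDiff (contDiff_infty.1 hsmooth 3) hkdv) fun j k _ => hdecay j k 2 using 3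
  ring
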